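/- Let T be a plane tree with Łukasiewicz path W, and let u, v ∈ T with idx(u) ≤ idx(v), neither of which is an ancestor of the other. Let w be their most recent common ancestor (the longest common prefix of u and v) and let û and v̂ be the children of w that are ancestors of u and v respectively. Then Σ_{x ∈ ]û,u]} (k_{pr(x)} − χ_x) + (χ_{v̂} − χ_{û}) = W(u) − min{W(m) : idx(u) ≤ m ≤ idx(v)}, where ]û,u] denotes the set of vertices on the ancestral path from û to u, excluding û and including u. -/

import Mathlib

/-!
The proof rests on the behaviour of the Łukasiewicz path along one edge: if `x` is a vertex and
`x ++ [j]` its `j`-th child, then `W(x ++ [j]) = W(x) + k_x - j` (`PlaneTree.lexSum_child`).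
Between `x` and `x ++ [j]` the path visits `x`, contributing `k_x - 1`, and then the full
subtrees above `x ++ [1], …, x ++ [j - 1]`, each contributing `-1` because a finite tree has
one edge fewer than it has vertices.

Telescoping along the ancestral path `]û,u]` turns the sum into `W(u) - W(û)`, and comparing the
two children `û`, `v̂` of `w` gives `χ_v̂ - χ_û = W(û) - W(v̂)`. So the left-hand side is
`W(u) - W(v̂)`, and it remains to see that `v̂` realises the minimum. A vertex `y` lying
lexicographically between `u` and `v` is a descendant of some child `w ++ [c]` with
`χ_û ≤ c ≤ χ_v̂`; since each edge increment `k_x - j` is nonnegative,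
`W(y) ≥ W(w ++ [c]) ≥ W(v̂)`.
-/

/-- A plane tree: a finite nonempty set of finite sequences of positive integers containing
the empty sequence (the root), closed under taking prefixes, and such that for every vertex
`u` there is `k_u ≥ 0` with `u ++ [i]` a vertex if and only if `1 ≤ i ≤ k_u`. -/
structure PlaneTree where
  verts : Finset (List ℕ)
  root_mem : ([] : List ℕ) ∈ verts
  prefix_closed : ∀ u ∈ verts, ∀ v : List ℕ, v <+: u → v ∈ verts
  children_iff : ∀ u ∈ verts, ∃ k : ℕ, ∀ i : ℕ, u ++ [i] ∈ verts ↔ 1 ≤ i ∧ i ≤ k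

namespace PlaneTree

/-- The number `k_u` of children of a vertex `u`: the number of vertices whose parent
(the sequence with its last entry removed) is `u`. -/
def deg (T : PlaneTree) (u : List ℕ) : ℕ :=
  (T.verts.filter fun v => v ≠ [] ∧ v.dropLast = u).card

/-- The index of a vertex `v` in the lexicographical listing `u_0 < u_1 < ⋯ < u_N` of the
vertices: the number of vertices lexicographically smaller than `v`. -/
def idx (T : PlaneTree) (v : List ℕ) : ℕ :=
  (T.verts.filter fun w => List.Lex (· < ·) w v).card

/-- The Łukasiewicz path of a plane tree: `W 0 = 0` and `W (j+1) = W j + k_{u_j} − 1`,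
where `u_0 < ⋯ < u_N` is the lexicographical listing of the vertices; equivalently,
`W j = Σ_{v : idx v < j} (k_v − 1)`. -/
def luka (T : PlaneTree) (j : ℕ) : ℤ :=
  ∑ v ∈ T.verts.filter (fun v => T.idx v < j), ((T.deg v : ℤ) - 1)

/-- The value of the Łukasiewicz path at (the index of) a vertex. -/
def lukaV (T : PlaneTree) (v : List ℕ) : ℤ := T.luka (T.idx v)

/-- `χ_u`: the last entry of a (nonempty) vertex `u`, i.e. its position among its siblings. -/
def chi (u : List ℕ) : ℕ := u.getLastD 0

end PlaneTree

namespace PlaneTree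

/-! ### The lexicographic order -/

theorem lt_append_zero_iff (x y : List ℕ) : y < x ++ [0] ↔ y < x ∨ y = x := by
  induction x generalizing y with
  | nil => cases y <;> simp [-not_lt, List.cons_lt_cons_iff]
  | cons a x ih =>
    cases y with
    | nil => simp
    | cons b y => simp only [List.cons_append, List.cons_lt_cons_iff, ih, List.cons.injEq]; tauto

theorem lt_append_succ_iff (x y : List ℕ) (j : ℕ) :
    y < x ++ [j + 1] ↔ y < x ++ [j] ∨ x ++ [j] <+: y := by
  induction x generalizing y with
  | nil =>
    cases y with
    | nil => simp
    | cons b y =>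
      simp only [List.nil_append, List.cons_lt_cons_iff, List.cons_prefix_cons, List.nil_prefix,
        List.not_lt_nil, and_true, and_false, or_false]
      omega
  | cons a x ih =>
    cases y with
    | nil => simp
    | cons b y =>
      simp only [List.cons_append, List.cons_lt_cons_iff, ih, List.cons_prefix_cons]
      constructor
      · rintro (h | ⟨rfl, h | h⟩) <;> simp_all
      · rintro ((h | ⟨rfl, h⟩) | ⟨rfl, h⟩) <;> simp_all

theorem not_lt_of_prefix {z y : List ℕ} (h : z <+: y) : ¬ y < z := by
  induction z generalizing y with
  | nil => simp
  | cons a z ih =>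
    cases y with
    | nil => simp at h
    | cons b y =>
      rw [List.cons_prefix_cons] at h
      obtain ⟨rfl, h⟩ := h
      simpa [List.cons_lt_cons_iff] using ih h

/-- The lists lexicographically between two strict extensions of `w` are strict extensions
of `w`. -/
theorem between_form (w p q y : List ℕ) (a b : ℕ) (hu : ¬ y < w ++ a :: p)
    (hv : ¬ w ++ b :: q < y) : ∃ c r, y = w ++ c :: r ∧ a ≤ c ∧ c ≤ b := by
  induction w generalizing y with
  | nil =>
    cases y with
    | nil => simp at hu
    | cons c r =>
      refine ⟨c, r, rfl, ?_⟩
      simp only [List.nil_append, List.cons_lt_cons_iff] at hu hv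
      omega
  | cons d w ih =>
    cases y with
    | nil => simp at hu
    | cons c r =>
      simp only [List.cons_append, List.cons_lt_cons_iff] at hu hv
      have hc : c = d := by omega
      subst hc
      obtain ⟨e, s, rfl, h⟩ := ih r (by tauto) (by tauto)
      exact ⟨e, s, rfl, h⟩

/-! ### The index of a vertex -/

theorem idx_mono (T : PlaneTree) {y v : List ℕ} (h : ¬ v < y) : T.idx y ≤ T.idx v := by
  apply Finset.card_le_card
  intro z hz
  simp only [Finset.mem_filter] at hz ⊢
  exact ⟨hz.1, lt_of_lt_of_le (show z < y from hz.2) (not_lt.mp h)⟩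

theorem idx_strict (T : PlaneTree) {y v : List ℕ} (hy : y ∈ T.verts) (h : y < v) :
    T.idx y < T.idx v := by
  apply Finset.card_lt_card
  rw [Finset.ssubset_iff_of_subset]
  · refine ⟨y, ?_, ?_⟩
    · simp only [Finset.mem_filter]; exact ⟨hy, h⟩
    · simp only [Finset.mem_filter]; exact fun hh => lt_irrefl y hh.2
  · intro z hz
    simp only [Finset.mem_filter] at hz ⊢
    exact ⟨hz.1, lt_trans (show z < y from hz.2) h⟩

theorem idx_lt_iff (T : PlaneTree) {y v : List ℕ} (hy : y ∈ T.verts) :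
    T.idx y < T.idx v ↔ y < v :=
  ⟨fun h => by by_contra hh; exact absurd (T.idx_mono (y := v) (v := y) hh) (by omega),
    T.idx_strict hy⟩

theorem idx_lt_card (T : PlaneTree) {v : List ℕ} (hv : v ∈ T.verts) :
    T.idx v < T.verts.card := by
  apply Finset.card_lt_card
  rw [Finset.ssubset_iff_of_subset (Finset.filter_subset _ _)]
  refine ⟨v, hv, ?_⟩
  simp only [Finset.mem_filter]
  exact fun hh => lt_irrefl v hh.2

/-- The indices exhaust `{0, …, N}`, since `idx` is injective on the vertices. -/
theorem exists_idx_eq (T : PlaneTree) {m : ℕ} (hm : m < T.verts.card) :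
    ∃ y ∈ T.verts, T.idx y = m := by
  have := Finset.surj_on_of_inj_on_of_card_le (s := T.verts) (t := Finset.range T.verts.card)
    (fun y _ => T.idx y) (fun y hy => Finset.mem_range.mpr (T.idx_lt_card hy))
    (fun y z hy hz h => by
      rcases lt_trichotomy y z with hl | hl | hl
      · exact absurd (T.idx_strict hy hl) (by omega)
      · exact hl
      · exact absurd (T.idx_strict hz hl) (by omega))
    (by simp) m (Finset.mem_range.mpr hm)
  obtain ⟨y, hy, h⟩ := this
  exact ⟨y, hy, h.symm⟩

/-! ### Increments of the path along edges -/

/-- The sum of `k_y - 1` over the vertices `y` lexicographically smaller than an arbitrary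
list `z`. It equals `W(z)` when `z` is a vertex, but allowing any `z` makes room for the
fictitious child `x ++ [0]` preceding all children of `x`. -/
def lexSum (T : PlaneTree) (z : List ℕ) : ℤ :=
  ∑ y ∈ T.verts.filter (fun y => y < z), ((T.deg y : ℤ) - 1)

theorem lukaV_eq_lexSum (T : PlaneTree) (v : List ℕ) : T.lukaV v = T.lexSum v := by
  unfold lukaV luka lexSum
  congr 1
  exact Finset.filter_congr fun y hy => T.idx_lt_iff hy

theorem mem_child_iff (T : PlaneTree) {x : List ℕ} (hx : x ∈ T.verts) (i : ℕ) :
    x ++ [i] ∈ T.verts ↔ 1 ≤ i ∧ i ≤ T.deg x := by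
  obtain ⟨k, hk⟩ := T.children_iff x hx
  have hdeg : T.deg x = k := by
    unfold deg
    have : (T.verts.filter fun v => v ≠ [] ∧ v.dropLast = x)
        = (Finset.Icc 1 k).image (fun i => x ++ [i]) := by
      ext y
      simp only [Finset.mem_filter, Finset.mem_image, Finset.mem_Icc]
      constructor
      · rintro ⟨hy, hne, rfl⟩
        have he := List.dropLast_append_getLast hne
        exact ⟨y.getLast hne, (hk _).mp (by rwa [he]), he⟩
      · rintro ⟨i, hi, rfl⟩
        exact ⟨(hk i).mpr hi, by simp, by simp⟩
    rw [this, Finset.card_image_of_injective _ (fun i j h => by simpa using h)]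
    simp
  rw [hk, hdeg]

/-- A subtree has one edge fewer than it has vertices. -/
theorem subtree_sum (T : PlaneTree) {z : List ℕ} (hz : z ∈ T.verts) :
    ∑ y ∈ T.verts.filter (fun y => z <+: y), ((T.deg y : ℤ) - 1) = -1 := by
  set A := T.verts.filter (fun y => z <+: y) with hA
  have hzA : z ∈ A := by simp [hA, hz]
  -- Each vertex of the subtree other than its root is counted once, by its parent.
  have hcard : (A.erase z).card = ∑ y ∈ A, T.deg y := by
    rw [Finset.card_eq_sum_card_fiberwise (f := List.dropLast) (t := A)]
    · apply Finset.sum_congr rfl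
      intro y hy
      unfold deg
      congr 1
      ext t
      simp only [hA, Finset.mem_filter, Finset.mem_erase] at hy ⊢
      constructor
      · rintro ⟨⟨hne, ht, hzt⟩, rfl⟩
        refine ⟨ht, ?_, rfl⟩
        rintro rfl
        exact hne (List.prefix_nil.mp hzt).symm
      · rintro ⟨ht, hne, rfl⟩
        refine ⟨⟨?_, ht, hy.2.trans (List.dropLast_prefix t)⟩, rfl⟩
        rintro rfl
        have h1 := hy.2.length_le
        have h2 := List.length_pos_iff.mpr hne
        simp only [List.length_dropLast] at h1
        omega
    · intro t ht
      simp only [hA, Finset.coe_erase, Set.mem_sdiff, Finset.mem_coe, Finset.mem_filter,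
        Set.mem_singleton_iff] at ht ⊢
      obtain ⟨⟨ht, r, rfl⟩, hne⟩ := ht
      refine ⟨T.prefix_closed _ ht _ (List.dropLast_prefix _), ?_⟩
      have hr : r ≠ [] := by rintro rfl; simp at hne
      rw [List.dropLast_append_of_ne_nil hr]
      exact List.prefix_append _ _
  rw [Finset.sum_sub_distrib]
  have h1 := Finset.card_erase_add_one hzA
  have h2 : ((A.erase z).card : ℤ) = ∑ y ∈ A, (T.deg y : ℤ) := by rw [hcard]; push_cast; rfl
  rw [← h2]
  simp only [Finset.sum_const, nsmul_eq_mul, mul_one]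
  omega

theorem lexSum_append_zero (T : PlaneTree) {x : List ℕ} (hx : x ∈ T.verts) :
    T.lexSum (x ++ [0]) = T.lexSum x + ((T.deg x : ℤ) - 1) := by
  unfold lexSum
  have : T.verts.filter (fun y => y < x ++ [0])
      = insert x (T.verts.filter (fun y => y < x)) := by
    ext y
    simp only [Finset.mem_filter, Finset.mem_insert, lt_append_zero_iff]
    constructor
    · tauto
    · rintro (rfl | h) <;> tauto
  rw [this, Finset.sum_insert (by simp), add_comm]

theorem lexSum_append_succ (T : PlaneTree) (x : List ℕ) (j : ℕ) :
    T.lexSum (x ++ [j + 1]) = T.lexSum (x ++ [j])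
      + ∑ y ∈ T.verts.filter (fun y => x ++ [j] <+: y), ((T.deg y : ℤ) - 1) := by
  unfold lexSum
  rw [← Finset.sum_union]
  · congr 1
    ext y
    simp only [Finset.mem_filter, Finset.mem_union, lt_append_succ_iff]
    tauto
  · rw [Finset.disjoint_filter]
    exact fun y _ h h' => not_lt_of_prefix h' h

theorem lexSum_child_aux (T : PlaneTree) {x : List ℕ} (hx : x ∈ T.verts) (j : ℕ)
    (hj : j ≤ T.deg x) :
    T.lexSum (x ++ [j + 1]) = T.lexSum x + T.deg x - (j + 1 : ℕ) := by
  induction j with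
  | zero =>
    -- The entry `0` never occurs in a vertex, so the subtree above `x ++ [0]` is empty.
    have : T.verts.filter (fun y => x ++ [0] <+: y) = ∅ := by
      rw [Finset.filter_eq_empty_iff]
      intro y hy h
      have := (T.mem_child_iff hx 0).mp (T.prefix_closed _ hy _ h)
      omega
    rw [lexSum_append_succ, this, lexSum_append_zero T hx]
    simp
    ring
  | succ j ih =>
    rw [lexSum_append_succ, ih (by omega),
      T.subtree_sum ((T.mem_child_iff hx (j + 1)).mpr (by omega))]
    push_cast
    ring

/-- Passing from a vertex to its `j`-th child changes the Łukasiewicz path by `k_x - j`. -/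
theorem lexSum_child (T : PlaneTree) {x : List ℕ} {j : ℕ} (h : x ++ [j] ∈ T.verts) :
    T.lexSum (x ++ [j]) = T.lexSum x + T.deg x - j ∧ 1 ≤ j ∧ j ≤ T.deg x := by
  have hx := T.prefix_closed _ h _ (List.prefix_append _ _)
  have hj := (T.mem_child_iff hx j).mp h
  obtain ⟨i, rfl⟩ : ∃ i, j = i + 1 := ⟨j - 1, by omega⟩
  exact ⟨T.lexSum_child_aux hx i (by omega), hj⟩

/-- The path never goes below its value at `z` while it visits the subtree above `z`. -/
theorem lexSum_descendant (T : PlaneTree) (z p : List ℕ) (h : z ++ p ∈ T.verts) :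
    T.lexSum z ≤ T.lexSum (z ++ p) := by
  induction p using List.reverseRecOn with
  | nil => simp
  | append_singleton p j ih =>
    rw [← List.append_assoc] at h ⊢
    have h1 := T.lexSum_child h
    have h2 := ih (T.prefix_closed _ h _ (List.prefix_append _ _))
    omega

/-- Telescoping `lexSum_child` along the ancestral path from `z` to `z ++ p`. -/
theorem sum_path (T : PlaneTree) (z p : List ℕ) (h : z ++ p ∈ T.verts) :
    ∑ x ∈ T.verts.filter (fun x => z <+: x ∧ x ≠ z ∧ x <+: z ++ p),
      ((T.deg x.dropLast : ℤ) - (chi x : ℤ)) = T.lexSum (z ++ p) - T.lexSum z := by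
  induction p using List.reverseRecOn with
  | nil =>
    have : T.verts.filter (fun x => z <+: x ∧ x ≠ z ∧ x <+: z ++ []) = ∅ := by
      rw [Finset.filter_eq_empty_iff]
      rintro x - ⟨h1, h2, h3⟩
      rw [List.append_nil] at h3
      exact h2 (h3.eq_of_length_le h1.length_le)
    rw [this]
    simp
  | append_singleton p j ih =>
    rw [← List.append_assoc] at h ⊢
    have h1 := T.lexSum_child h
    have h2 := ih (T.prefix_closed _ h _ (List.prefix_append _ _))
    have hset : T.verts.filter (fun x => z <+: x ∧ x ≠ z ∧ x <+: z ++ p ++ [j])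
        = insert (z ++ p ++ [j])
          (T.verts.filter (fun x => z <+: x ∧ x ≠ z ∧ x <+: z ++ p)) := by
      ext x
      simp only [Finset.mem_filter, Finset.mem_insert, List.prefix_concat_iff]
      constructor
      · tauto
      · rintro (rfl | h')
        · exact ⟨h, ⟨p ++ [j], by simp⟩, by simp, Or.inl rfl⟩
        · tauto
    rw [hset, Finset.sum_insert, h2, h1.1]
    · simp [chi]
      ring
    · simp only [Finset.mem_filter, not_and]
      intro _ _ _ h'
      have := h'.length_le
      simp at this

end PlaneTree

/-! ### Locating the minimum -/

/-- Let `T` be a plane tree with Łukasiewicz path `W`, and let `u, v ∈ T` with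
`idx u ≤ idx v`, neither being an ancestor (prefix) of the other. Let `w` be their longest
common prefix and `û = u.take (w.length + 1)`, `v̂ = v.take (w.length + 1)` the children of
`w` that are ancestors of `u`, `v` respectively. Then
`Σ_{x ∈ ]û,u]} (k_{pr(x)} − χ_x) + (χ_{v̂} − χ_{û}) = W(u) − min{W m : idx u ≤ m ≤ idx v}`,
where `]û,u]` is the set of vertices of the ancestral path from `û` to `u`, excluding `û`
and including `u`. -/
theorem sum_right_branching_eq_luka_sub_min (T : PlaneTree) (u v : List ℕ)
    (hu : u ∈ T.verts) (hv : v ∈ T.verts) (hidx : T.idx u ≤ T.idx v)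
    (h1 : ¬ u <+: v) (h2 : ¬ v <+: u)
    (w : List ℕ) (hwu : w <+: u) (hwv : w <+: v)
    (hwmax : ∀ w' : List ℕ, w' <+: u → w' <+: v → w' <+: w) :
    (∑ x ∈ T.verts.filter
        (fun x => u.take (w.length + 1) <+: x ∧ x ≠ u.take (w.length + 1) ∧ x <+: u),
        ((T.deg x.dropLast : ℤ) - (PlaneTree.chi x : ℤ)))
      + ((PlaneTree.chi (v.take (w.length + 1)) : ℤ)
          - (PlaneTree.chi (u.take (w.length + 1)) : ℤ))
    = T.lukaV u - sInf {z : ℤ | ∃ m : ℕ, T.idx u ≤ m ∧ m ≤ T.idx v ∧ z = T.luka m} := by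
  obtain ⟨p', rfl⟩ := hwu
  obtain ⟨q', rfl⟩ := hwv
  obtain ⟨a, p, rfl⟩ : ∃ a p, p' = a :: p := by
    cases p' with
    | nil => simp at h1
    | cons a p => exact ⟨a, p, rfl⟩
  obtain ⟨b, q, rfl⟩ : ∃ b q, q' = b :: q := by
    cases q' with
    | nil => simp at h2
    | cons b q => exact ⟨b, q, rfl⟩
  have htu : (w ++ a :: p).take (w.length + 1) = w ++ [a] := by simp [List.take_append]
  have htv : (w ++ b :: q).take (w.length + 1) = w ++ [b] := by simp [List.take_append]
  have hua : w ++ a :: p = (w ++ [a]) ++ p := by simp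
  have hvb : w ++ b :: q = (w ++ [b]) ++ q := by simp
  have hmema : w ++ [a] ∈ T.verts := T.prefix_closed _ hu _ ⟨p, by simp⟩
  have hmemb : w ++ [b] ∈ T.verts := T.prefix_closed _ hv _ ⟨q, by simp⟩
  have ha := T.lexSum_child hmema
  have hb := T.lexSum_child hmemb
  have hne : a ≠ b := by
    rintro rfl
    have := (hwmax (w ++ [a]) ⟨p, by simp⟩ ⟨q, by simp⟩).length_le
    simp at this
  have hle : ¬ w ++ b :: q < w ++ a :: p := fun h => by
    have := T.idx_strict hv h
    omega
  have hab : a < b := by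
    obtain ⟨c, r, hc, hac, hcb⟩ := PlaneTree.between_form w p q (w ++ a :: p) a b
      (lt_irrefl _) hle
    simp only [List.append_cancel_left_eq, List.cons.injEq] at hc
    omega
  -- The minimum is attained at the child of `w` above which `v` lies.
  have hmin : IsLeast {z : ℤ | ∃ m : ℕ, T.idx (w ++ a :: p) ≤ m ∧ m ≤ T.idx (w ++ b :: q) ∧
      z = T.luka m} (T.lexSum (w ++ [b])) := by
    constructor
    · refine ⟨T.idx (w ++ [b]), ?_, ?_, (T.lukaV_eq_lexSum _).symm⟩
      · apply T.idx_mono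
        clear * - hab
        induction w with
        | nil => simp only [List.nil_append, List.cons_lt_cons_iff]; omega
        | cons d w ih =>
          simp only [List.cons_append, List.cons_lt_cons_iff, lt_irrefl, false_or, true_and]
          exact ih
      · exact T.idx_mono (PlaneTree.not_lt_of_prefix ⟨q, by simp⟩)
    · rintro z ⟨m, hm1, hm2, rfl⟩
      obtain ⟨y, hy, rfl⟩ := T.exists_idx_eq (lt_of_le_of_lt hm2 (T.idx_lt_card hv))
      obtain ⟨c, r, rfl, hac, hcb⟩ := PlaneTree.between_form w p q y a b
        (fun h => by have := T.idx_strict hy h; omega)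
        (fun h => by have := T.idx_strict hv h; omega)
      have hyc : w ++ c :: r = (w ++ [c]) ++ r := by simp
      have hc := T.lexSum_child (x := w) (j := c) (T.prefix_closed _ hy _ ⟨r, by simp⟩)
      have hd := T.lexSum_descendant (w ++ [c]) r (hyc ▸ hy)
      rw [← hyc, ← T.lukaV_eq_lexSum (w ++ c :: r)] at hd
      change _ ≤ T.lukaV (w ++ c :: r)
      omega
  rw [hmin.csInf_eq, htu, htv, T.lukaV_eq_lexSum]
  have hs := T.sum_path (w ++ [a]) p (hua ▸ hu)
  rw [← hua] at hs
  rw [hs]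
  simp only [PlaneTree.chi, List.getLastD_concat]
  omega
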